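/- There exists an F₄-linear code C ⊆ F₄^{74} of F₄-dimension 55 whose minimum Hamming distance is 9 and which contains its Hermitian dual: C^{⊥h} ⊆ C. -/

import Mathlib

open Polynomial

set_option synthInstance.maxHeartbeats 1000000
set_option maxHeartbeats 1000000

noncomputable section

/-- The field `F₄ = GF(4)`. -/
abbrev F4 : Type := GaloisField 2 2

/-- The coefficient vector `[p]ₙ ∈ F₄ⁿ` of the remainder of `p` modulo `Xⁿ - 1`
(coefficient of `X^i` in position `i`). -/
def coeffVec (n : ℕ) (p : Polynomial F4) : Fin n → F4 :=
  fun i => (p % (X ^ n - 1)).coeff i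

/-- The Hermitian inner product `⟨u,v⟩_h = ∑ i, u i * (v i)²` on `F₄^m`. -/
def hermInner {m : ℕ} (u v : Fin m → F4) : F4 := ∑ i, u i * (v i) ^ 2

/-- The Hermitian inner product on `F₄ⁿ × F₄ⁿ`: the sum of the Hermitian inner
products of the two components. -/
def hermInner2 {n : ℕ} (u v : (Fin n → F4) × (Fin n → F4)) : F4 :=
  hermInner u.1 v.1 + hermInner u.2 v.2

/-- The conjugate transform `f̄ := f₀² + ∑_{i=1}^{n-1} f_i² X^{n-i}`, where `f` is first
reduced modulo `Xⁿ - 1`. -/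
def conjT (n : ℕ) (f : Polynomial F4) : Polynomial F4 :=
  C (((f % (X ^ n - 1)).coeff 0) ^ 2) +
    ∑ i ∈ Finset.Ico 1 n, C (((f % (X ^ n - 1)).coeff i) ^ 2) * X ^ (n - i)

/-- The Hermitian dual generator `g^{⊥h}(X) := ∑_{j=0}^{deg h} (h_j)² X^{deg h - j}`,
the conjugate reciprocal of the check polynomial `h = (Xⁿ-1)/g`. -/
def dualGen (n : ℕ) (g : Polynomial F4) : Polynomial F4 :=
  ∑ j ∈ Finset.range (((X ^ n - 1) / g).natDegree + 1),
    C ((((X ^ n - 1) / g).coeff j) ^ 2) * X ^ (((X ^ n - 1) / g).natDegree - j)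

lemma hermInner_add_right {m : ℕ} (u v w : Fin m → F4) :
    hermInner u (v + w) = hermInner u v + hermInner u w := by
  simp only [hermInner, Pi.add_apply]
  rw [← Finset.sum_add_distrib]
  refine Finset.sum_congr rfl fun i _ => ?_
  rw [add_pow_char (v i) (w i) 2, mul_add]

lemma hermInner_smul_right {m : ℕ} (c : F4) (u v : Fin m → F4) :
    hermInner u (c • v) = c ^ 2 * hermInner u v := by
  simp only [hermInner, Pi.smul_apply, smul_eq_mul, mul_pow, Finset.mul_sum]
  exact Finset.sum_congr rfl fun i _ => by ring

/-- The Hermitian dual code `C^{⊥h} = {v | ∀ u ∈ C, ⟨u,v⟩_h = 0}` of a linear code in `F₄^m`. -/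
def hermDual {m : ℕ} (Ccode : Submodule F4 (Fin m → F4)) : Submodule F4 (Fin m → F4) where
  carrier := {v | ∀ u ∈ Ccode, hermInner u v = 0}
  zero_mem' := by intro u _; simp [hermInner]
  add_mem' := by
    intro v w hv hw u hu
    rw [hermInner_add_right, hv u hu, hw u hu, add_zero]
  smul_mem' := by
    intro c v hv u hu
    rw [hermInner_smul_right, hv u hu, mul_zero]

lemma hermInner2_add_right {n : ℕ} (u v w : (Fin n → F4) × (Fin n → F4)) :
    hermInner2 u (v + w) = hermInner2 u v + hermInner2 u w := by
  simp only [hermInner2, Prod.fst_add, Prod.snd_add, hermInner_add_right]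
  ring

lemma hermInner2_smul_right {n : ℕ} (c : F4) (u v : (Fin n → F4) × (Fin n → F4)) :
    hermInner2 u (c • v) = c ^ 2 * hermInner2 u v := by
  simp only [hermInner2, Prod.smul_fst, Prod.smul_snd, hermInner_smul_right]
  ring

/-- The Hermitian dual code of a linear code in `F₄ⁿ × F₄ⁿ` (identified with `F₄^{2n}`). -/
def hermDualPair {n : ℕ} (Ccode : Submodule F4 ((Fin n → F4) × (Fin n → F4))) :
    Submodule F4 ((Fin n → F4) × (Fin n → F4)) where
  carrier := {v | ∀ u ∈ Ccode, hermInner2 u v = 0}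
  zero_mem' := by intro u _; simp [hermInner2, hermInner]
  add_mem' := by
    intro v w hv hw u hu
    rw [hermInner2_add_right, hv u hu, hw u hu, add_zero]
  smul_mem' := by
    intro c v hv u hu
    rw [hermInner2_smul_right, hv u hu, mul_zero]

/-- Hamming weight of a vector. -/
def hammingWt {m : ℕ} (u : Fin m → F4) : ℕ := Nat.card {i : Fin m // u i ≠ 0}

/-- The 2-generator quasi-cyclic code `C(g₁,g₂,ν)` of length `2n` and index 2:
the `F₄`-span of all `([a·ν·g₁]ₙ, [a·g₁]ₙ)` and `([b·g₂]ₙ, [b·ν·g₂]ₙ)`. -/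
def Cqc (n : ℕ) (g₁ g₂ ν : Polynomial F4) : Submodule F4 ((Fin n → F4) × (Fin n → F4)) :=
  Submodule.span F4
    ({x | ∃ a : Polynomial F4, x = (coeffVec n (a * ν * g₁), coeffVec n (a * g₁))} ∪
     {x | ∃ b : Polynomial F4, x = (coeffVec n (b * g₂), coeffVec n (b * ν * g₂))})

/-- The quasi-cyclic code `D`: the `F₄`-span of all `([-ν̄·c·g₁^{⊥h}]ₙ, [c·g₁^{⊥h}]ₙ)`
and `([s·g₂^{⊥h}]ₙ, [-ν̄·s·g₂^{⊥h}]ₙ)`. -/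
def Dqc (n : ℕ) (g₁ g₂ ν : Polynomial F4) : Submodule F4 ((Fin n → F4) × (Fin n → F4)) :=
  Submodule.span F4
    ({x | ∃ c : Polynomial F4,
        x = (coeffVec n (-(conjT n ν) * c * dualGen n g₁), coeffVec n (c * dualGen n g₁))} ∪
     {x | ∃ s : Polynomial F4,
        x = (coeffVec n (s * dualGen n g₂), coeffVec n (-(conjT n ν) * s * dualGen n g₂))})

/-- The quotient ring `R = F₄[X]/(Xⁿ - 1)`. -/
abbrev Rng (n : ℕ) : Type := Polynomial F4 ⧸ Ideal.span ({X ^ n - 1} : Set (Polynomial F4))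

/-- The natural projection `F₄[X] → R`. -/
def toRng (n : ℕ) : Polynomial F4 →+* Rng n := Ideal.Quotient.mk _

/-- The `R`-linear map `R → R × R`, `a ↦ (a·û, a·v̂)`, where `û, v̂` are the images of
`u, v` in `R`. -/
def qcMap (n : ℕ) (u v : Polynomial F4) : Rng n →ₗ[Rng n] Rng n × Rng n :=
  (LinearMap.toSpanSingleton (Rng n) (Rng n) (toRng n u)).prod
    (LinearMap.toSpanSingleton (Rng n) (Rng n) (toRng n v))

/-!
The code consists of the pairs `(a, b)` of polynomials of degree less than 37 with
`θ a(ξ) + b(ξ) = 0` in `K = F₄[X]/(h)`. Here `h` is a divisor of degree 19 of `X³⁷ - 1`, `ξ` is the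
class of `X`, and `θ` is a sum of powers of `ξ` with `θ⁵ = 1`. As `1, ξ, …, ξ¹⁷, ξ¹⁹` is a basis
of `K`, the code has codimension 19, and it contains its Hermitian dual because the rows of the
parity-check matrix are pairwise orthogonal.

Multiplication by `ξ` and the Frobenius map of `K` induce permutations of the 74 positions that
preserve the code. If a nonzero codeword has weight at most 8, these move it so that at most four
of its nonzero entries lie outside the 19 pivots of the parity-check matrix. A search through the
combinations of at most four non-pivot columns excludes that. To make the search feasible by kernel
computation, whole lists of vectors are stored as pairs of bit strings and processed by bitwise
operations on natural numbers.
-/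

instance : DecidableEq F4 := Classical.decEq F4

namespace F4

lemma pow_four (x : F4) : x ^ 4 = x := by
  have := Fintype.ofFinite F4
  have hcard : Fintype.card F4 = 4 := by
    rw [← Nat.card_eq_fintype_card, GaloisField.card 2 2 two_ne_zero]
    norm_num
  simpa only [hcard] using FiniteField.pow_card x

lemma exists_sq_eq_add_one : ∃ ω : F4, ω ^ 2 = ω + 1 := by
  have hcard : Nat.card F4 = 4 := GaloisField.card 2 2 two_ne_zero
  obtain ⟨x, hx⟩ : ∃ x : F4, x ∉ ({0, 1} : Finset F4) := by
    by_contra! hall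
    have := Fintype.ofFinite F4
    have huniv : Finset.univ ⊆ ({0, 1} : Finset F4) := fun x _ => hall x
    have hle := (Finset.card_le_card huniv).trans Finset.card_le_two
    rw [Finset.card_univ, ← Nat.card_eq_fintype_card, hcard] at hle
    omega
  simp only [Finset.mem_insert, Finset.mem_singleton, not_or] at hx
  have hfactor : x * (x - 1) * (x ^ 2 - (x + 1)) = 0 := by
    linear_combination pow_four x - (x ^ 3 - x) * CharTwo.two_eq_zero (R := F4)
  simp only [mul_eq_zero, hx.1, sub_eq_zero, hx.2, or_self, false_or] at hfactor
  exact ⟨x, hfactor⟩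

/-- A primitive cube root of unity `ω` in `F₄`. -/
def omega : F4 := exists_sq_eq_add_one.choose

lemma omega_sq : omega ^ 2 = omega + 1 := exists_sq_eq_add_one.choose_spec

/-- The element `x + y ω` of `F₄`, for a pair of bits `(x, y)`. -/
def ofBits (b : Bool × Bool) : F4 := b.1.toNat + b.2.toNat * omega

lemma ofBits_xor (a b : Bool × Bool) :
    ofBits (a.1 ^^ b.1, a.2 ^^ b.2) = ofBits a + ofBits b := by
  obtain ⟨_ | _, _ | _⟩ := a <;> obtain ⟨_ | _, _ | _⟩ := b <;>
    simp [ofBits] <;> grind [CharTwo.two_eq_zero (R := F4)]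

lemma ofBits_eq_zero_iff {b : Bool × Bool} : ofBits b = 0 ↔ b = (false, false) := by
  have h₀ : omega ≠ 0 := fun h => by simpa [h] using omega_sq
  have h₁ : omega ≠ 1 := fun h => by simpa [h] using omega_sq
  obtain ⟨_ | _, _ | _⟩ := b <;>
    simp [ofBits, h₀, CharTwo.add_eq_zero, Ne.symm h₁]

lemma exists_ofBits_eq (x : F4) : ∃ b, ofBits b = x := by
  have hfactor : x * (x - 1) * (x - omega) * (x - (1 + omega)) = 0 := by
    linear_combination pow_four x + (x ^ 2 - x) * omega_sq
      + (x ^ 2 - x * omega + 2 * x ^ 2 * omega - x ^ 3 - x ^ 3 * omega) *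
        CharTwo.two_eq_zero (R := F4)
  simp only [mul_eq_zero, sub_eq_zero] at hfactor
  obtain ((h | h) | h) | h := hfactor <;> rw [h]
  exacts [⟨(false, false), by simp [ofBits]⟩, ⟨(true, false), by simp [ofBits]⟩,
    ⟨(false, true), by simp [ofBits]⟩, ⟨(true, true), by simp [ofBits]⟩]

/-- The pair of bits of the conjugate `x²` of the element with pair of bits `b`. -/
def conjBits (b : Bool × Bool) : Bool × Bool := (b.1 ^^ b.2, b.2)

lemma ofBits_conjBits (b : Bool × Bool) : ofBits (conjBits b) = ofBits b ^ 2 := by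
  obtain ⟨_ | _, _ | _⟩ := b <;>
    simp [ofBits, conjBits] <;> grind [CharTwo.two_eq_zero (R := F4), omega_sq]

end F4

/-! ### Codes given by parity-check columns -/

section ColumnCode

variable {ι κ K V : Type*}

section Semiring

variable [Semiring K] [AddCommMonoid V] [Module K V]

variable (K) in
/-- The permutations of the columns `c` that are induced by linear endomorphisms. -/
def columnSymmetries (c : ι → V) : Submonoid (Equiv.Perm ι) where
  carrier := {g | ∃ L : V →ₗ[K] V, ∀ i, L (c i) = c (g i)}
  one_mem' := ⟨LinearMap.id, fun _ => rfl⟩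
  mul_mem' := by
    rintro g h ⟨L, hL⟩ ⟨M, hM⟩
    exact ⟨L ∘ₗ M, fun i => by rw [LinearMap.comp_apply, hM, hL, Equiv.Perm.mul_apply]⟩

variable [Fintype ι]

variable (K) in
/-- The linear code whose parity-check matrix has columns `c`. The columns may lie in any module,
so that no basis has to be chosen. -/
def columnCode (c : ι → V) : Submodule K (ι → K) := LinearMap.ker (Fintype.linearCombination K c)

lemma mem_columnCode {c : ι → V} {v : ι → K} : v ∈ columnCode K c ↔ ∑ i, v i • c i = 0 := by
  rw [columnCode, LinearMap.mem_ker, Fintype.linearCombination_apply]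

lemma comp_symm_mem_columnCode_iff [Fintype κ] {c : κ → V} (e : ι ≃ κ) {v : ι → K} :
    v ∘ e.symm ∈ columnCode K c ↔ v ∈ columnCode K (c ∘ e) := by
  rw [mem_columnCode, mem_columnCode, ← e.sum_comp]
  simp only [Function.comp_apply, Equiv.symm_apply_apply]

lemma comp_symm_mem_columnCode {c : ι → V} {g : Equiv.Perm ι} (hg : g ∈ columnSymmetries K c)
    {v : ι → K} (hv : v ∈ columnCode K c) : v ∘ g.symm ∈ columnCode K c := by
  obtain ⟨L, hL⟩ := hg
  rw [comp_symm_mem_columnCode_iff, mem_columnCode]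
  simp only [Function.comp_apply]
  simpa only [map_sum, map_smul, map_zero, hL] using congrArg L (mem_columnCode.mp hv)

end Semiring

section Field

variable [Field K]

lemma finrank_columnCode [Fintype ι] [AddCommGroup V] [Module K V] {c : ι → V}
    (hc : Submodule.span K (Set.range c) = ⊤) :
    Module.finrank K (columnCode K c) + Module.finrank K V = Fintype.card ι := by
  have h := (Fintype.linearCombination K c).finrank_range_add_finrank_ker
  rw [Fintype.range_linearCombination, hc, finrank_top, Module.finrank_fintype_fun_eq_card] at h
  rw [columnCode, add_comm, h]

lemma span_range_eq_top_of_single [Finite κ] [DecidableEq κ] {c : ι → κ → K} {pos : κ → ι}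
    (hpos : ∀ p, c (pos p) = Pi.single p 1) : Submodule.span K (Set.range c) = ⊤ := by
  rw [eq_top_iff, ← (Pi.basisFun K κ).span_eq, Submodule.span_le]
  rintro _ ⟨p, rfl⟩
  rw [Pi.basisFun_apply, ← hpos]
  exact Submodule.subset_span ⟨pos p, rfl⟩

end Field

/-- The index set is the disjoint union of the members of the duplicate-free list `l` and the
values of the injection `pos`. -/
structure SplitsInto (l : List ι) (pos : κ → ι) : Prop where
  nodup : l.Nodup
  injective : Function.Injective pos
  mem_iff : ∀ i, i ∈ l ↔ ∀ p, pos p ≠ i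

variable [Fintype ι]

lemma SplitsInto.sum_eq [Fintype κ] [AddCommMonoid V] [DecidableEq ι] {l : List ι}
    {pos : κ → ι} (h : SplitsInto l pos) (f : ι → V) :
    ∑ i, f i = ∑ i ∈ l.toFinset, f i + ∑ p, f (pos p) := by
  have hcompl : l.toFinsetᶜ = Finset.univ.map ⟨pos, h.injective⟩ := by
    ext i
    simp [h.mem_iff]
  rw [← Finset.sum_add_sum_compl l.toFinset, hcompl, Finset.sum_map]
  rfl

lemma SplitsInto.sum_free_add_eq_zero [Finite κ] [DecidableEq κ] [Semiring K] {l : List ι}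
    {pos : κ → ι} (h : SplitsInto l pos) {c : ι → κ → K} (hpos : ∀ p, c (pos p) = Pi.single p 1)
    {v : ι → K} (hv : v ∈ columnCode K c) : (l.map fun i => v i • c i).sum + v ∘ pos = 0 := by
  classical
  have := Fintype.ofFinite κ
  rw [← mem_columnCode.mp hv, h.sum_eq, List.sum_toFinset _ h.nodup]
  congr 1
  ext q
  simp [hpos, Finset.sum_apply, Pi.single_apply]

lemma SplitsInto.exists_free_ne_zero [Finite κ] [DecidableEq κ] [Semiring K] {l : List ι}
    {pos : κ → ι} (h : SplitsInto l pos) {c : ι → κ → K} (hpos : ∀ p, c (pos p) = Pi.single p 1)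
    {v : ι → K} (hv : v ∈ columnCode K c) (hv₀ : v ≠ 0) : ∃ i ∈ l, v i ≠ 0 := by
  by_contra! hfree
  have hparity := h.sum_free_add_eq_zero hpos hv
  rw [List.sum_eq_zero (by simp +contextual [hfree]), zero_add] at hparity
  refine hv₀ (funext fun i => ?_)
  by_cases hi : i ∈ l
  · exact hfree i hi
  · obtain ⟨p, rfl⟩ : ∃ p, pos p = i := by simpa [h.mem_iff] using hi
    exact congrFun hparity p

variable [Fintype κ] [Zero K] [DecidableEq K]

lemma hammingNorm_comp_equiv (v : κ → K) (e : ι ≃ κ) : hammingNorm (v ∘ e) = hammingNorm v := by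
  simp only [hammingNorm, Finset.card_filter]
  exact e.sum_comp fun j => if v j ≠ 0 then 1 else 0

lemma SplitsInto.hammingNorm_eq {l : List ι} {pos : κ → ι} (h : SplitsInto l pos) (v : ι → K) :
    hammingNorm v = l.countP (v · ≠ 0) + hammingNorm (v ∘ pos) := by
  classical
  rw [← h.nodup.card_eq_countP]
  simp only [hammingNorm, Finset.card_filter]
  exact h.sum_eq _

end ColumnCode

section HermitianDual

lemma hammingWt_eq_hammingNorm {m : ℕ} (u : Fin m → F4) : hammingWt u = hammingNorm u := by
  rw [hammingWt, Nat.card_eq_fintype_card, Fintype.card_subtype, hammingNorm]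

theorem hermDual_columnCode_le {m r : ℕ} {c : Fin m → Fin r → F4}
    (hrows : ∀ p q, hermInner (c · p) (c · q) = 0) :
    hermDual (columnCode F4 c) ≤ columnCode F4 c := by
  intro v hv
  -- A functional that vanishes on the code is a combination of parity checks.
  obtain ⟨ψ, hψ⟩ : ∃ ψ : Module.Dual F4 (Fin r → F4),
      ψ ∘ₗ Fintype.linearCombination F4 c = Fintype.linearCombination F4 (fun i => v i ^ 2) := by
    change _ ∈ LinearMap.range (Fintype.linearCombination F4 c).dualMap
    rw [LinearMap.range_dualMap_eq_dualAnnihilator_ker, Submodule.mem_dualAnnihilator]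
    exact fun u hu => hv u hu
  have hv_sq (i : Fin m) : v i ^ 2 = ∑ q, c i q * ψ (Pi.single q 1) := by
    have hcoord := LinearMap.congr_fun hψ (Pi.single i 1)
    rw [LinearMap.comp_apply, Fintype.linearCombination_apply_single,
      Fintype.linearCombination_apply_single, one_smul, one_smul] at hcoord
    conv_lhs => rw [← hcoord, pi_eq_sum_univ' (c i), map_sum]
    simp only [map_smul, smul_eq_mul]
  have hv_eq (i : Fin m) : v i = ∑ q, c i q ^ 2 * ψ (Pi.single q 1) ^ 2 := by
    rw [← F4.pow_four (v i), pow_mul (v i) 2 2, hv_sq, sum_pow_char]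
    simp only [mul_pow]
  rw [mem_columnCode]
  ext p
  calc (∑ i, v i • c i) p
      = ∑ i, ∑ q, c i p * c i q ^ 2 * ψ (Pi.single q 1) ^ 2 := by
        rw [Finset.sum_apply]
        refine Finset.sum_congr rfl fun i _ => ?_
        rw [Pi.smul_apply, smul_eq_mul, hv_eq, mul_comm, Finset.mul_sum]
        exact Finset.sum_congr rfl fun q _ => (mul_assoc ..).symm
    _ = ∑ q, hermInner (c · p) (c · q) * ψ (Pi.single q 1) ^ 2 := by
        rw [Finset.sum_comm]
        simp only [hermInner, Finset.sum_mul]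
    _ = 0 := Finset.sum_eq_zero fun q _ => by rw [hrows, zero_mul]

end HermitianDual

/-! ### Bitwise arithmetic over `F₄` -/

/-- A finitely supported sequence over `F₄`, stored as two bit strings: entry `i` is `x + y ω`
with `x`, `y` the `i`-th bits of `lo`, `hi`. -/
structure Packed where
  lo : ℕ
  hi : ℕ
  deriving DecidableEq

namespace Packed

/-- The two bits of the `i`-th entry. -/
def bits (v : Packed) (i : ℕ) : Bool × Bool := (v.lo.testBit i, v.hi.testBit i)

/-- The `i`-th entry, as an element of `F₄`. -/
def get (v : Packed) (i : ℕ) : F4 := F4.ofBits (v.bits i)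

/-- The first `r` entries, as a vector. -/
def toVec (r : ℕ) (v : Packed) : Fin r → F4 := fun p => v.get p

instance : Zero Packed := ⟨⟨0, 0⟩⟩

instance : Add Packed := ⟨fun v w => ⟨v.lo ^^^ w.lo, v.hi ^^^ w.hi⟩⟩

@[simp] lemma get_zero (i : ℕ) : (0 : Packed).get i = 0 := by
  change F4.ofBits (Nat.testBit 0 i, Nat.testBit 0 i) = 0
  simp [F4.ofBits]

@[simp] lemma get_add (v w : Packed) (i : ℕ) : (v + w).get i = v.get i + w.get i := by
  change F4.ofBits ((v.lo ^^^ w.lo).testBit i, (v.hi ^^^ w.hi).testBit i) = _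
  rw [Nat.testBit_xor, Nat.testBit_xor]
  exact F4.ofBits_xor (v.bits i) (w.bits i)

lemma hammingNorm_toVec (r : ℕ) (v : Packed) :
    hammingNorm (v.toVec r) = Fintype.card {p : Fin r // v.bits p ≠ (false, false)} := by
  simp only [hammingNorm, toVec, get, ne_eq, F4.ofBits_eq_zero_iff, Fintype.card_subtype]

/-- The multiple of a sequence by `F4.ofBits a`. -/
def scale (a : Bool × Bool) (v : Packed) : Packed :=
  match a with
  | (false, false) => 0
  | (true, false) => v
  | (false, true) => ⟨v.hi, v.lo ^^^ v.hi⟩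
  | (true, true) => ⟨v.lo ^^^ v.hi, v.lo⟩

@[simp] lemma get_scale (a : Bool × Bool) (v : Packed) (i : ℕ) :
    (v.scale a).get i = F4.ofBits a * v.get i := by
  obtain ⟨_ | _, _ | _⟩ := a <;> simp only [scale, get_zero]
  · simp [F4.ofBits]
  · simp only [get, bits, Nat.testBit_xor]
    cases v.lo.testBit i <;> cases v.hi.testBit i <;> simp [F4.ofBits] <;> grind [F4.omega_sq]
  · simp [F4.ofBits]
  · simp only [get, bits, Nat.testBit_xor]
    cases v.lo.testBit i <;> cases v.hi.testBit i <;> simp [F4.ofBits] <;>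
      grind [F4.omega_sq, CharTwo.two_eq_zero (R := F4)]

/-- The linear combination of the sequences `v i` with coefficients `F4.ofBits (a i)`. -/
def linComb {n : ℕ} (a : Fin n → Bool × Bool) (v : Fin n → Packed) : Packed :=
  (List.finRange n).foldr (fun i s => (v i).scale (a i) + s) 0

lemma toVec_linComb {r n : ℕ} (a : Fin n → Bool × Bool) (v : Fin n → Packed) :
    (linComb a v).toVec r = ∑ i, F4.ofBits (a i) • (v i).toVec r := by
  rw [Fin.sum_univ_def, linComb]
  induction List.finRange n with
  | nil => ext p; simp [toVec]
  | cons i l ih =>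
    rw [List.foldr_cons, List.map_cons, List.sum_cons, ← ih]
    ext p
    simp [toVec]

/-- The sequence whose first `n` entries are `F4.ofBits a` and whose other entries vanish. -/
def const (n : ℕ) (a : Bool × Bool) : Packed :=
  ⟨a.1.toNat * (2 ^ n - 1), a.2.toNat * (2 ^ n - 1)⟩

lemma get_const {n i : ℕ} (hi : i < n) (a : Bool × Bool) : (const n a).get i = F4.ofBits a := by
  obtain ⟨_ | _, _ | _⟩ := a <;> simp [get, bits, const, Nat.testBit_two_pow_sub_one, hi]

/-- The first `n` entries of `v`, followed by the entries of `w`. -/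
def append (n : ℕ) (v w : Packed) : Packed :=
  ⟨v.lo % 2 ^ n ||| w.lo <<< n, v.hi % 2 ^ n ||| w.hi <<< n⟩

lemma get_append_left {n i : ℕ} (hi : i < n) (v w : Packed) :
    (v.append n w).get i = v.get i := by
  simp [get, bits, append, hi, Nat.not_le.mpr hi]

lemma get_append_right (n i : ℕ) (v w : Packed) : (v.append n w).get (n + i) = w.get i := by
  simp [get, bits, append]

/-- The set of positions of nonzero entries, as a bit string. -/
def supportMask (v : Packed) : ℕ := v.lo ||| v.hi

lemma testBit_supportMask (v : Packed) (i : ℕ) :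
    v.supportMask.testBit i = decide (v.get i ≠ 0) := by
  simp only [supportMask, Nat.testBit_or, get, ne_eq, F4.ofBits_eq_zero_iff, bits]
  cases v.lo.testBit i <;> cases v.hi.testBit i <;> simp

end Packed

/-- One step of counting lanes: if the lanes in the bit string `T[k]` are those that have
occurred at least `k` times so far, this adds one occurrence of each lane in `m`. -/
def countStep (T : List ℕ) (m : ℕ) : List ℕ :=
  List.zipWith (fun t prev => t ||| prev &&& m) T (0 :: T)

/-- The bit string of those `i < n` that lie in at least `t` of the bit strings `ms`. -/
def coveredAtLeast (n t : ℕ) (ms : List ℕ) : ℕ :=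
  (ms.foldl countStep ((2 ^ n - 1) :: List.replicate t 0)).getD t 0

lemma length_countStep (T : List ℕ) (m : ℕ) : (countStep T m).length = T.length := by
  simp [countStep]

lemma testBit_countStep {T : List ℕ} {i c : ℕ}
    (hT : ∀ k < T.length, (T.getD k 0).testBit i = decide (k ≤ c)) (m k : ℕ)
    (hk : k < T.length) :
    ((countStep T m).getD k 0).testBit i = decide (k ≤ c + (m.testBit i).toNat) := by
  have hstep : (countStep T m).getD k 0 = T.getD k 0 ||| (0 :: T).getD k 0 &&& m := by
    have hk' : k < (0 :: T).length := by simp; omega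
    rw [List.getD_eq_getElem _ _ hk, List.getD_eq_getElem _ _ hk',
      List.getD_eq_getElem _ _ (by rwa [length_countStep])]
    simp [countStep]
  rw [hstep, Nat.testBit_or, Nat.testBit_and, hT k hk]
  cases k with
  | zero => simp
  | succ k =>
    rw [List.getD_cons_succ, hT k (by omega)]
    cases m.testBit i <;> grind

lemma testBit_foldl_countStep (i : ℕ) (ms : List ℕ) {T : List ℕ} {c : ℕ}
    (hT : ∀ k < T.length, (T.getD k 0).testBit i = decide (k ≤ c)) (k : ℕ) (hk : k < T.length) :
    ((ms.foldl countStep T).getD k 0).testBit i =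
      decide (k ≤ c + ms.countP (·.testBit i)) := by
  induction ms generalizing T c with
  | nil => simpa using hT k hk
  | cons m ms ih =>
    rw [List.foldl_cons, List.countP_cons, ih (c := c + (m.testBit i).toNat)
      (fun k hk => testBit_countStep hT m k (by rwa [length_countStep] at hk))
      (by rwa [length_countStep])]
    cases m.testBit i <;> grind

lemma testBit_coveredAtLeast {n i : ℕ} (hi : i < n) (t : ℕ) (ms : List ℕ) :
    (coveredAtLeast n t ms).testBit i = decide (t ≤ ms.countP (·.testBit i)) := by
  rw [coveredAtLeast, testBit_foldl_countStep i ms (c := 0) _ t (by simp), zero_add]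
  intro k hk
  cases k with
  | zero => simp [Nat.testBit_two_pow_sub_one, hi]
  | succ k => simp [List.getElem?_replicate]; split_ifs <;> simp

/-! ### Exhaustive search over combinations of columns -/

/-- A list of `size` vectors in `F₄ʳ`, called lanes, stored coordinate by coordinate: entry `i` of
`rows[p]` is coordinate `p` of lane `i`. -/
structure Batch (r : ℕ) where
  size : ℕ
  rows : List Packed

namespace Batch

variable {r : ℕ}

/-- The `p`-th coordinates of all lanes. -/
def row (B : Batch r) (p : ℕ) : Packed := B.rows.getD p 0

/-- The `i`-th vector of the batch. -/
def lane (B : Batch r) (i : ℕ) : Fin r → F4 := fun p => (B.row p).get i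

/-- The batch of `n` lanes with coordinate sequences `f`. -/
def ofRows (n : ℕ) (f : Fin r → Packed) : Batch r := ⟨n, (List.finRange r).map f⟩

lemma row_ofRows (n : ℕ) (f : Fin r → Packed) (p : Fin r) : (ofRows n f).row p = f p := by
  simp [row, ofRows]

/-- `B` contains `z` among its vectors. -/
def HasLane (B : Batch r) (z : Fin r → F4) : Prop := ∃ i < B.size, B.lane i = z

/-- The batch of the vectors of `B` followed by those of `B'`. -/
def append (B B' : Batch r) : Batch r :=
  ofRows (B.size + B'.size) fun p => (B.row p).append B.size (B'.row p)

lemma HasLane.append_left {B : Batch r} {z : Fin r → F4} (h : B.HasLane z) (B' : Batch r) :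
    (B.append B').HasLane z := by
  obtain ⟨i, hi, rfl⟩ := h
  refine ⟨i, Nat.lt_add_right _ hi, funext fun p => ?_⟩
  rw [lane, append, row_ofRows, Packed.get_append_left hi, lane]

lemma HasLane.append_right {B' : Batch r} {z : Fin r → F4} (h : B'.HasLane z) (B : Batch r) :
    (B.append B').HasLane z := by
  obtain ⟨i, hi, rfl⟩ := h
  refine ⟨B.size + i, Nat.add_lt_add_left hi _, funext fun p => ?_⟩
  rw [lane, append, row_ofRows, Packed.get_append_right, lane]

/-- The batch of the vectors of `B`, each translated by `c`. -/
def translate (B : Batch r) (c : Packed) : Batch r :=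
  ofRows B.size fun p => B.row p + Packed.const B.size (c.bits p)

lemma HasLane.translate {B : Batch r} {z : Fin r → F4} (h : B.HasLane z) (c : Packed) :
    (B.translate c).HasLane (z + c.toVec r) := by
  obtain ⟨i, hi, rfl⟩ := h
  refine ⟨i, hi, funext fun p => ?_⟩
  rw [lane, Batch.translate, row_ofRows, Packed.get_add, Packed.get_const hi]
  rfl

/-- `B` together with all `z + a • c`, for `z` in `prev` and `a ≠ 0`. -/
def extend (B prev : Batch r) (c : Packed) : Batch r :=
  ((B.append (prev.translate (c.scale (true, false)))).append
    (prev.translate (c.scale (false, true)))).append (prev.translate (c.scale (true, true)))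

lemma HasLane.extend_left {B : Batch r} {z : Fin r → F4} (h : B.HasLane z) (prev : Batch r)
    (c : Packed) : (B.extend prev c).HasLane z :=
  ((h.append_left _).append_left _).append_left _

lemma HasLane.extend_right {prev : Batch r} {z : Fin r → F4} (h : prev.HasLane z) (B : Batch r)
    (c : Packed) {a : F4} (ha : a ≠ 0) : (B.extend prev c).HasLane (z + a • c.toVec r) := by
  obtain ⟨b, rfl⟩ := F4.exists_ofBits_eq a
  have hb : (c.scale b).toVec r = F4.ofBits b • c.toVec r := funext fun p => c.get_scale b p
  have htranslate := h.translate (c.scale b)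
  rw [hb] at htranslate
  obtain ⟨_ | _, _ | _⟩ := b
  · exact absurd (F4.ofBits_eq_zero_iff.mpr rfl) ha
  · exact (htranslate.append_right _).append_left _
  · exact ((htranslate.append_right _).append_left _).append_left _
  · exact htranslate.append_right _

/-- The assertion that all vectors of `B` have weight at least `t`. -/
def weightsAtLeast (B : Batch r) (t : ℕ) : Bool :=
  coveredAtLeast B.size t ((List.finRange r).map fun p : Fin r => (B.row p).supportMask) ==
    2 ^ B.size - 1

lemma HasLane.le_hammingNorm {B : Batch r} {z : Fin r → F4} (h : B.HasLane z) {t : ℕ}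
    (hB : B.weightsAtLeast t = true) : t ≤ hammingNorm z := by
  obtain ⟨i, hi, rfl⟩ := h
  have hbit := testBit_coveredAtLeast hi t
    ((List.finRange r).map fun p : Fin r => (B.row p).supportMask)
  rw [beq_iff_eq.mp hB, Nat.testBit_two_pow_sub_one, decide_eq_true hi, List.countP_map] at hbit
  refine (of_decide_eq_true hbit.symm).trans_eq ?_
  simp only [Function.comp_def, Packed.testBit_supportMask, hammingNorm]
  rw [Finset.card_def, Finset.filter_val, ← Multiset.countP_eq_card_filter]
  rfl

/-- Given batches `L[j]` of sums of `j` columns, include the sums that involve the further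
column `c`. -/
def searchStep (c : Packed) (L : List (Batch r)) : List (Batch r) :=
  List.zipWith (fun B prev => B.extend prev c) L (⟨0, []⟩ :: L)

lemma length_searchStep (c : Packed) (L : List (Batch r)) : (searchStep c L).length = L.length := by
  simp [searchStep]

/-- The assertion that `z + c` has weight at least `d - (j + 1)` for all `z` in `L[j]`. -/
def checkLevels (d : ℕ) (c : Packed) (L : List (Batch r)) : Bool :=
  L.zipIdx.all fun x => (x.1.translate c).weightsAtLeast (d - (x.2 + 1))

/-- Run through the columns, checking every combination in which the last coefficient is `1`. -/
def search (d : ℕ) : List Packed → List (Batch r) → Bool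
  | [], _ => true
  | c :: cs, L => checkLevels d c L && search d cs (searchStep c L)

/-- The last nonzero value of `v` along the list is `1`. -/
def EndsInOne {ι : Type*} (v : ι → F4) : List ι → Prop
  | [] => False
  | i :: l => EndsInOne v l ∨ v i = 1 ∧ ∀ j ∈ l, v j = 0

lemma exists_smul_endsInOne {ι : Type*} (v : ι → F4) {l : List ι} (h : ∃ i ∈ l, v i ≠ 0) :
    ∃ a : F4, a ≠ 0 ∧ EndsInOne (a • v) l := by
  induction l with
  | nil => simp at h
  | cons i l ih =>
    by_cases hl : ∃ j ∈ l, v j ≠ 0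
    · obtain ⟨a, ha, hav⟩ := ih hl
      exact ⟨a, ha, Or.inl hav⟩
    · push Not at hl
      have hi : v i ≠ 0 := by
        obtain ⟨j, hj, hvj⟩ := h
        rcases List.mem_cons.mp hj with rfl | hj
        exacts [hvj, absurd (hl j hj) hvj]
      refine ⟨(v i)⁻¹, inv_ne_zero hi, Or.inr ⟨inv_mul_cancel₀ hi, fun j hj => ?_⟩⟩
      rw [Pi.smul_apply, hl j hj, smul_zero]

lemma EndsInOne.countP_pos {ι : Type*} {v : ι → F4} {l : List ι} (h : EndsInOne v l) :
    0 < l.countP (v · ≠ 0) := by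
  induction l with
  | nil => exact h.elim
  | cons i l ih =>
    rw [List.countP_pos_iff]
    rcases h with h | ⟨hone, -⟩
    · obtain ⟨j, hj, hvj⟩ := List.countP_pos_iff.mp (ih h)
      exact ⟨j, List.mem_cons_of_mem _ hj, hvj⟩
    · exact ⟨i, List.mem_cons_self, by simp [hone]⟩

/-- `z` is one of the vectors of the `k`-th batch. -/
def AtLevel (L : List (Batch r)) (k : ℕ) (z : Fin r → F4) : Prop :=
  ∃ B, L[k]? = some B ∧ B.HasLane z

lemma AtLevel.lt_length {L : List (Batch r)} {k : ℕ} {z : Fin r → F4} (h : AtLevel L k z) :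
    k < L.length := by
  obtain ⟨B, hB, -⟩ := h
  exact (List.getElem?_eq_some_iff.mp hB).1

lemma AtLevel.searchStep {L : List (Batch r)} {k : ℕ} {z : Fin r → F4} (h : AtLevel L k z)
    (c : Packed) : AtLevel (searchStep c L) k z := by
  have hk := h.lt_length
  obtain ⟨B, hB, hz⟩ := h
  refine ⟨_, ?_, hz.extend_left (((⟨0, []⟩ : Batch r) :: L)[k]'(by simp; omega)) c⟩
  rw [List.getElem?_eq_some_iff] at hB ⊢
  exact ⟨by simp [Batch.searchStep, hk], by simp [Batch.searchStep, hB.2]⟩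

lemma AtLevel.searchStep_succ {L : List (Batch r)} {k : ℕ} {z : Fin r → F4} (h : AtLevel L k z)
    (hk : k + 1 < L.length) (c : Packed) {a : F4} (ha : a ≠ 0) :
    AtLevel (Batch.searchStep c L) (k + 1) (z + a • c.toVec r) := by
  obtain ⟨B, hB, hz⟩ := h
  refine ⟨_, ?_, hz.extend_right L[k + 1] c ha⟩
  rw [List.getElem?_eq_some_iff] at hB ⊢
  exact ⟨by simp [Batch.searchStep, hk], by simp [Batch.searchStep, hB.2]⟩

lemma AtLevel.le_hammingNorm {L : List (Batch r)} {k d : ℕ} {z : Fin r → F4} (h : AtLevel L k z)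
    {c : Packed} (hL : checkLevels d c L = true) :
    d ≤ hammingNorm (z + c.toVec r) + (k + 1) := by
  obtain ⟨B, hB, hz⟩ := h
  have hcheck := List.all_eq_true.mp hL (B, k) (List.mem_zipIdx_iff_getElem?.mpr hB)
  have := (hz.translate c).le_hammingNorm hcheck
  omega

theorem le_hammingNorm_of_search {ι : Type*} {col : ι → Packed} {v : ι → F4} {d : ℕ}
    {I : List ι} {L : List (Batch r)} {k : ℕ} {z : Fin r → F4}
    (hsearch : search d (I.map col) L = true) (hz : AtLevel L k z) (hv : EndsInOne v I)
    (hk : k + I.countP (v · ≠ 0) ≤ L.length) :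
    d ≤ hammingNorm (z + (I.map fun i => v i • (col i).toVec r).sum)
      + (k + I.countP (v · ≠ 0)) := by
  induction I generalizing L k z with
  | nil => exact hv.elim
  | cons i I ih =>
    obtain ⟨hcheck, hrest⟩ := Bool.and_eq_true_iff.mp hsearch
    rw [List.map_cons, List.sum_cons, ← add_assoc z]
    by_cases hi : v i = 0
    · have hv' : EndsInOne v I := hv.resolve_right fun h => one_ne_zero (h.1.symm.trans hi)
      rw [List.countP_cons_of_neg (by simpa using hi)] at hk ⊢
      rw [hi, zero_smul, add_zero]
      exact ih hrest (hz.searchStep _) hv' (by rwa [length_searchStep])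
    rw [List.countP_cons_of_pos (by simpa using hi)] at hk ⊢
    rcases hv with hv' | ⟨hone, hzero⟩
    · have hpos : 0 < I.countP (v · ≠ 0) := hv'.countP_pos
      have := ih hrest (hz.searchStep_succ (by omega) (col i) hi) hv'
        (by rw [length_searchStep]; omega)
      omega
    · have hcount : I.countP (v · ≠ 0) = 0 := by simpa [List.countP_eq_zero] using hzero
      have hsum : (I.map fun i => v i • (col i).toVec r).sum = 0 := by
        refine List.sum_eq_zero fun x hx => ?_
        obtain ⟨j, hj, rfl⟩ := List.mem_map.mp hx
        rw [hzero j hj, zero_smul]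
      rw [hone, one_smul, hsum, add_zero, hcount, zero_add]
      exact hz.le_hammingNorm hcheck

/-- The initial batches of `search`: the zero vector is the only sum of no columns, and no sums
of `1, …, n` columns have been formed yet. -/
def initialLevels (r n : ℕ) : List (Batch r) := ⟨1, []⟩ :: List.replicate n ⟨0, []⟩

lemma atLevel_initialLevels (r n : ℕ) : AtLevel (initialLevels r n) 0 0 :=
  ⟨⟨1, []⟩, rfl, 0, one_pos, funext fun _ => Packed.get_zero 0⟩

end Batch

section PackedColumns

variable {ι : Type*} {r : ℕ} {col : ι → Packed}

lemma Packed.toVec_two_pow (p : Fin r) : (⟨2 ^ (p : ℕ), 0⟩ : Packed).toVec r = Pi.single p 1 := by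
  ext q
  rcases eq_or_ne q p with rfl | h
  · simp [toVec, get, bits, F4.ofBits]
  · have hval : (p : ℕ) ≠ q := fun h' => h (Fin.ext h'.symm)
    simp [toVec, get, bits, F4.ofBits, h, Nat.testBit_two_pow_of_ne hval]

lemma mem_columnSymmetries_of_linComb {pos : Fin r → ι} {g : Equiv.Perm ι}
    (h : ∀ i, Packed.linComb (fun p : Fin r => (col i).bits p) (fun p => col (g (pos p)))
      = col (g i)) :
    g ∈ columnSymmetries F4 fun i => (col i).toVec r := by
  refine ⟨Fintype.linearCombination F4 fun p => (col (g (pos p))).toVec r, fun i => ?_⟩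
  dsimp only
  rw [← h, Packed.toVec_linComb]
  rfl

lemma toVec_mem_columnCode {m : ℕ} {col : Fin m → Packed} {w : Packed}
    (h : Packed.linComb (fun i : Fin m => w.bits i) col = 0) :
    w.toVec m ∈ columnCode F4 fun i => (col i).toVec r := by
  refine mem_columnCode.mpr ((Packed.toVec_linComb _ _).symm.trans ?_)
  rw [h]
  exact funext fun p => Packed.get_zero p

lemma hermDual_columnCode_le_of_linComb {m : ℕ} {col : Fin m → Packed}
    (h : ∀ q : Fin r, Packed.linComb (fun i => F4.conjBits ((col i).bits q)) col = 0) :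
    hermDual (columnCode F4 fun i => (col i).toVec r) ≤
      columnCode F4 fun i => (col i).toVec r := by
  refine hermDual_columnCode_le fun p q => ?_
  calc hermInner (fun i => (col i).toVec r p) (fun i => (col i).toVec r q)
      = (Packed.linComb (fun i => F4.conjBits ((col i).bits q)) col).toVec r p := by
        rw [Packed.toVec_linComb, Finset.sum_apply, hermInner]
        refine Finset.sum_congr rfl fun i _ => ?_
        rw [Pi.smul_apply, smul_eq_mul, F4.ofBits_conjBits, mul_comm]
        rfl
    _ = 0 := by
        rw [h]
        exact Packed.get_zero p

theorem le_hammingNorm_of_mem_columnCode [Fintype ι] {l : List ι} {pos : Fin r → ι}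
    (hsplit : SplitsInto l pos) (hpos : ∀ p, (col (pos p)).toVec r = Pi.single p 1) {d n : ℕ}
    (hsearch : Batch.search d (l.map col) (Batch.initialLevels r n) = true) {v : ι → F4}
    (hv : v ∈ columnCode F4 fun i => (col i).toVec r) (hv₀ : v ≠ 0)
    (hfree : l.countP (v · ≠ 0) ≤ n + 1) :
    d ≤ hammingNorm v := by
  obtain ⟨a, ha, hlast⟩ := Batch.exists_smul_endsInOne v (hsplit.exists_free_ne_zero hpos hv hv₀)
  have hparity := hsplit.sum_free_add_eq_zero hpos (Submodule.smul_mem _ a hv)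
  have hcount : l.countP ((a • v) · ≠ 0) = l.countP (v · ≠ 0) := by simp [ha]
  have hnorm : hammingNorm (a • v) = hammingNorm v :=
    hammingNorm_smul (fun _ => IsSMulRegular.of_ne_zero ha) v
  have hle := Batch.le_hammingNorm_of_search hsearch (Batch.atLevel_initialLevels r n) hlast
    (by simp only [Batch.initialLevels, List.length_cons, List.length_replicate]; omega)
  have hpivot : hammingNorm (l.map fun i => (a • v) i • (col i).toVec r).sum =
      hammingNorm ((a • v) ∘ pos) := by
    rw [eq_neg_of_add_eq_zero_left hparity]
    simp only [hammingNorm, Pi.neg_apply, neg_ne_zero]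
  rw [zero_add, zero_add, hpivot] at hle
  rwa [← hnorm, hsplit.hammingNorm_eq, add_comm]

end PackedColumns

/-! ### The quasi-cyclic code -/

namespace QuasiCyclicCode

/-- Multiplication by `ξ` on `K = F₄[X]/(h)`, where `ξ` is the class of `X` and `h` is a divisor
of degree 19 of `X³⁷ - 1`. Elements of `K` are coordinate vectors with respect to the basis
`1, ξ, …, ξ¹⁷, ξ¹⁹`; the two constants are the coordinates of `ξ¹⁸` and `ξ²⁰`. -/
def mulXi (v : Packed) : Packed :=
  ⟨v.lo % 2 ^ 17 * 2, v.hi % 2 ^ 17 * 2⟩ + Packed.scale (v.bits 17) ⟨171926, 274625⟩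
    + Packed.scale (v.bits 18) ⟨258553, 499898⟩

/-- The coordinates of `ξ ^ j`. -/
def powXi (j : ℕ) : Packed := mulXi^[j] ⟨1, 0⟩

/-- The parity-check columns of the code: `θ ξ ^ j` at index `(0, j)` and `ξ ^ j` at `(1, j)`,
where `θ` is the sum of `ξ ^ 16 ^ k` over `k < 9`. -/
def column (i : Fin 2 × ZMod 37) : Packed :=
  if i.1 = 0 then
    Packed.linComb (fun _ : Fin 9 => (true, false)) fun k => powXi ((16 ^ (k : ℕ) + i.2.val) % 37)
  else powXi i.2.val

/-- The parity-check columns, as vectors over `F₄`. -/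
def parityColumn (i : Fin 2 × ZMod 37) : Fin 19 → F4 := (column i).toVec 19

/-- The exponent of the `p`-th element of the basis `1, ξ, …, ξ¹⁷, ξ¹⁹`. This set of exponents,
unlike `{0, …, 18}`, contains the image of every set of four residues under some map
`j ↦ 16 ^ k * j + t`. -/
def pivotPosition (p : Fin 19) : ZMod 37 := if p = 18 then 19 else (p : ℕ)

/-- The index at which the parity-check column is the `p`-th unit vector. -/
def pivotIndex (p : Fin 19) : Fin 2 × ZMod 37 := (1, pivotPosition p)

/-- The information positions: the indices that are not pivots. -/
def freeIndices : List (Fin 2 × ZMod 37) :=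
  (List.finRange 2 ×ˢ (List.range 37).map (Nat.cast : ℕ → ZMod 37)).filter
    fun i => ∀ p, pivotIndex p ≠ i

lemma splitsInto_freeIndices : SplitsInto freeIndices pivotIndex where
  nodup := by decide +kernel
  injective := by decide +kernel
  mem_iff := by decide +kernel

lemma column_pivotIndex : ∀ p : Fin 19, column (pivotIndex p) = ⟨2 ^ (p : ℕ), 0⟩ := by
  decide +kernel

lemma parityColumn_pivotIndex (p : Fin 19) : parityColumn (pivotIndex p) = Pi.single p 1 := by
  rw [parityColumn, column_pivotIndex, Packed.toVec_two_pow]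

/-- The simultaneous cyclic shift of both blocks, induced by multiplication by `ξ`. -/
def shift : Equiv.Perm (Fin 2 × ZMod 37) := (Equiv.refl _).prodCongr (Equiv.addRight 1)

/-- The exchange of the two blocks that is induced by the map `x ↦ θ x⁴` of `K`. It maps `ξ ^ j` to
`θ ξ ^ (4 * j)`, and `θ ξ ^ j` to `ξ ^ (4 * j)` because `θ⁵ = 1`. -/
def frobeniusSwap : Equiv.Perm (Fin 2 × ZMod 37) where
  toFun i := (1 - i.1, 4 * i.2)
  invFun i := (1 - i.1, 28 * i.2)
  left_inv := by decide +kernel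
  right_inv := by decide +kernel

lemma shift_mem_columnSymmetries : shift ∈ columnSymmetries F4 parityColumn :=
  mem_columnSymmetries_of_linComb (col := column) (pos := pivotIndex) (by decide +kernel)

lemma frobeniusSwap_mem_columnSymmetries : frobeniusSwap ∈ columnSymmetries F4 parityColumn :=
  mem_columnSymmetries_of_linComb (col := column) (pos := pivotIndex) (by decide +kernel)

lemma affine_mem_columnSymmetries (k : ℕ) (t : ZMod 37) :
    shift ^ t.val * (frobeniusSwap ^ 2) ^ k ∈ columnSymmetries F4 parityColumn :=
  mul_mem (pow_mem shift_mem_columnSymmetries _)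
    (pow_mem (pow_mem frobeniusSwap_mem_columnSymmetries _) _)

lemma affine_apply (k : ℕ) (t : ZMod 37) (i : Fin 2 × ZMod 37) :
    (shift ^ t.val * (frobeniusSwap ^ 2) ^ k) i = (i.1, 16 ^ k * i.2 + t) := by
  have hshift (n : ℕ) (i : Fin 2 × ZMod 37) : (shift ^ n) i = (i.1, i.2 + n) := by
    induction n with
    | zero => simp
    | succ n ih => rw [pow_succ', Equiv.Perm.mul_apply, ih]; simp [shift, add_assoc]
  have hswap (i : Fin 2 × ZMod 37) : ((frobeniusSwap ^ 2) ^ k) i = (i.1, 16 ^ k * i.2) := by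
    induction k with
    | zero => simp
    | succ k ih =>
      rw [pow_succ', Equiv.Perm.mul_apply, ih, pow_two, Equiv.Perm.mul_apply]
      simp only [frobeniusSwap, Equiv.coe_fn_mk, sub_sub_cancel]
      ring_nf
  rw [Equiv.Perm.mul_apply, hswap, hshift, ZMod.natCast_zmod_val]

/-- The set of pivot positions, as a bit string. -/
def pivotMask : ℕ := 2 ^ 18 - 1 + 2 ^ 19

/-- A bit string whose bit `t`, for `t < 37`, tells whether `16 ^ k * b + t` is a pivot
position. -/
def translatedPivotMask (k b : ℕ) : ℕ := (pivotMask ||| pivotMask <<< 37) >>> (16 ^ k * b % 37)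

lemma exists_pivotPosition_of_testBit :
    ∀ t < 74, (pivotMask ||| pivotMask <<< 37).testBit t = true → ∃ p, pivotPosition p = t := by
  decide +kernel

lemma exists_pivotPosition_of_testBit_translated {k b t : ℕ} (ht : t < 37)
    (h : (translatedPivotMask k b).testBit t = true) : ∃ p, pivotPosition p = 16 ^ k * b + t := by
  rw [translatedPivotMask, Nat.testBit_shiftRight] at h
  have hlt : 16 ^ k * b % 37 + t < 74 := by omega
  simpa using exists_pivotPosition_of_testBit _ hlt h

set_option maxRecDepth 10000 in
lemma translatedPivotMasks_meet :
    ((List.range 37).all fun b => (List.range 37).all fun c => (List.range 37).all fun d =>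
      (List.range 9).any fun k => pivotMask &&& translatedPivotMask k b &&&
        translatedPivotMask k c &&& translatedPivotMask k d != 0) = true := by
  decide +kernel

lemma exists_translatedPivotMasks_meet (b c d : ZMod 37) :
    ∃ k, pivotMask &&& translatedPivotMask k b.val &&& translatedPivotMask k c.val &&&
      translatedPivotMask k d.val ≠ 0 := by
  have hmeet := translatedPivotMasks_meet
  simp only [List.all_eq_true, List.any_eq_true, List.mem_range, bne_iff_ne] at hmeet
  obtain ⟨k, -, hk⟩ := hmeet b.val b.val_lt c.val c.val_lt d.val d.val_lt
  exact ⟨k, hk⟩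

lemma lt_of_testBit_pivotMask {t : ℕ} (ht : pivotMask.testBit t = true) : t < 37 := by
  by_contra! hle
  have hlt : pivotMask < 2 ^ t := lt_of_lt_of_le (by decide) (Nat.pow_le_pow_right two_pos hle)
  exact Bool.false_ne_true ((Nat.testBit_lt_two_pow hlt).symm.trans ht)

lemma exists_affine_pivotPosition_of_zero (b c d : ZMod 37) :
    ∃ (k : ℕ) (t : ZMod 37), ∀ j ∈ ({0, b, c, d} : Finset (ZMod 37)),
      ∃ p, pivotPosition p = 16 ^ k * j + t := by
  obtain ⟨k, hk⟩ := exists_translatedPivotMasks_meet b c d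
  obtain ⟨t, ht⟩ := Nat.exists_testBit_of_ne_zero hk
  simp only [Nat.testBit_and, Bool.and_eq_true] at ht
  obtain ⟨⟨⟨htpivot, htb⟩, htc⟩, htd⟩ := ht
  have hpivot (j : ZMod 37) (hj : (translatedPivotMask k j.val).testBit t = true) :
      ∃ p, pivotPosition p = 16 ^ k * j + t := by
    simpa using exists_pivotPosition_of_testBit_translated (lt_of_testBit_pivotMask htpivot) hj
  have hzero : (translatedPivotMask k (0 : ZMod 37).val).testBit t = true := by
    simp [translatedPivotMask, htpivot]
  refine ⟨k, t, fun j hj => hpivot j ?_⟩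
  simp only [Finset.mem_insert, Finset.mem_singleton] at hj
  rcases hj with rfl | rfl | rfl | rfl <;> assumption

lemma exists_affine_pivotPosition {S : Finset (ZMod 37)} (hS : S.card ≤ 4) :
    ∃ (k : ℕ) (t : ZMod 37), ∀ j ∈ S, ∃ p, pivotPosition p = 16 ^ k * j + t := by
  obtain ⟨S', hSS', hS'⟩ := Finset.exists_superset_card_eq hS (by simp)
  obtain ⟨a, s, -, rfl, hs⟩ := Finset.card_eq_succ.mp hS'
  obtain ⟨b, c, d, -, -, -, rfl⟩ := Finset.card_eq_three.mp hs
  obtain ⟨k, t, hkt⟩ := exists_affine_pivotPosition_of_zero (b - a) (c - a) (d - a)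
  refine ⟨k, t - 16 ^ k * a, fun j hj => ?_⟩
  obtain ⟨p, hp⟩ := hkt (j - a) (by
    have hj' := hSS' hj
    simp only [Finset.mem_insert, Finset.mem_singleton] at hj' ⊢
    rcases hj' with rfl | rfl | rfl | rfl <;> simp)
  exact ⟨p, hp.trans (by ring)⟩

/-- The support of a word in block `b`. -/
def blockSupport (v : Fin 2 × ZMod 37 → F4) (b : Fin 2) : Finset (ZMod 37) := {j | v (b, j) ≠ 0}

lemma mem_blockSupport {v : Fin 2 × ZMod 37 → F4} {b : Fin 2} {j : ZMod 37} :
    j ∈ blockSupport v b ↔ v (b, j) ≠ 0 := by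
  rw [blockSupport, Finset.mem_filter_univ]

lemma hammingNorm_eq_card_blockSupport (v : Fin 2 × ZMod 37 → F4) :
    hammingNorm v = (blockSupport v 0).card + (blockSupport v 1).card := by
  simp only [hammingNorm, blockSupport, Finset.card_filter, Fintype.sum_prod_type, Fin.sum_univ_two]

lemma card_blockSupport_comp_frobeniusSwap_symm (v : Fin 2 × ZMod 37 → F4) (b : Fin 2) :
    (blockSupport (v ∘ frobeniusSwap.symm) b).card = (blockSupport v (1 - b)).card := by
  have hleft (j : ZMod 37) : 4 * (28 * j) = j := by
    rw [← mul_assoc, show (4 * 28 : ZMod 37) = 1 from rfl, one_mul]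
  have hright (j : ZMod 37) : 28 * (4 * j) = j := by
    rw [← mul_assoc, show (28 * 4 : ZMod 37) = 1 from rfl, one_mul]
  refine Finset.card_bij' (fun j _ => 28 * j) (fun j _ => 4 * j) (fun j hj => ?_) (fun j hj => ?_)
    (fun j _ => hleft j) (fun j _ => hright j)
  · exact mem_blockSupport.mpr (mem_blockSupport (v := v ∘ frobeniusSwap.symm).mp hj)
  · refine mem_blockSupport.mpr ?_
    change v (1 - b, 28 * (4 * j)) ≠ 0
    rw [hright]
    exact mem_blockSupport.mp hj

lemma exists_symm_card_blockSupport_le (v : Fin 2 × ZMod 37 → F4) :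
    ∃ g ∈ columnSymmetries F4 parityColumn,
      (blockSupport (v ∘ g.symm) 0).card ≤ (blockSupport (v ∘ g.symm) 1).card := by
  rcases le_total (blockSupport v 0).card (blockSupport v 1).card with h | h
  · exact ⟨1, one_mem _, h⟩
  · refine ⟨frobeniusSwap, frobeniusSwap_mem_columnSymmetries, ?_⟩
    rw [card_blockSupport_comp_frobeniusSwap_symm, card_blockSupport_comp_frobeniusSwap_symm]
    exact h

lemma countP_freeIndices_add_card_le {v : Fin 2 × ZMod 37 → F4} {P : Finset (Fin 19)}
    (hP : ∀ p ∈ P, v (pivotIndex p) ≠ 0) :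
    freeIndices.countP (v · ≠ 0) + P.card ≤ hammingNorm v := by
  rw [splitsInto_freeIndices.hammingNorm_eq]
  refine Nat.add_le_add_left (Finset.card_le_card fun p hp => ?_) _
  exact (Finset.mem_filter_univ p).mpr (hP p hp)

lemma exists_symm_countP_freeIndices_add_card_le {v : Fin 2 × ZMod 37 → F4}
    {S : Finset (ZMod 37)} (hS : S ⊆ blockSupport v 1) (hcard : S.card ≤ 4) :
    ∃ g ∈ columnSymmetries F4 parityColumn,
      freeIndices.countP ((v ∘ g.symm) · ≠ 0) + S.card ≤ hammingNorm v := by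
  obtain ⟨k, t, hkt⟩ := exists_affine_pivotPosition hcard
  have hpivot : ∀ j ∈ S, ∃ p, (shift ^ t.val * (frobeniusSwap ^ 2) ^ k) (1, j) = pivotIndex p := by
    intro j hj
    obtain ⟨p, hp⟩ := hkt j hj
    exact ⟨p, by rw [affine_apply, pivotIndex, hp]⟩
  have hg := affine_mem_columnSymmetries k t
  generalize shift ^ t.val * (frobeniusSwap ^ 2) ^ k = g at hpivot hg
  choose! p hp using hpivot
  have hinjective : Set.InjOn p S := fun i hi j hj hij => by
    simpa using g.injective ((hp i hi).trans ((congrArg pivotIndex hij).trans (hp j hj).symm))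
  refine ⟨g, hg, ?_⟩
  rw [← hammingNorm_comp_equiv v g.symm, ← Finset.card_image_of_injOn hinjective]
  refine countP_freeIndices_add_card_le fun q hq => ?_
  obtain ⟨j, hj, rfl⟩ := Finset.mem_image.mp hq
  rw [← hp j hj, Function.comp_apply, Equiv.symm_apply_apply]
  exact mem_blockSupport.mp (hS hj)

lemma exists_symm_countP_freeIndices_le {v : Fin 2 × ZMod 37 → F4} (hv : hammingNorm v ≤ 8) :
    ∃ g ∈ columnSymmetries F4 parityColumn, freeIndices.countP ((v ∘ g.symm) · ≠ 0) ≤ 4 := by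
  obtain ⟨g, hg, hle⟩ := exists_symm_card_blockSupport_le v
  rw [← hammingNorm_comp_equiv v g.symm] at hv
  obtain ⟨S, hS, hcard⟩ := Finset.exists_subset_card_eq
    (min_le_right 4 (blockSupport (v ∘ g.symm) 1).card)
  obtain ⟨g', hg', hcount⟩ := exists_symm_countP_freeIndices_add_card_le hS (by omega)
  have hnorm := hammingNorm_eq_card_blockSupport (v ∘ g.symm)
  refine ⟨g' * g, mul_mem hg' hg, ?_⟩
  change freeIndices.countP (((v ∘ g.symm) ∘ g'.symm) · ≠ 0) ≤ 4
  omega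

set_option maxRecDepth 100000 in
lemma search_columns :
    Batch.search 9 (freeIndices.map column) (Batch.initialLevels 19 3) = true := by
  decide +kernel

theorem nine_le_hammingNorm {v : Fin 2 × ZMod 37 → F4} (hv : v ∈ columnCode F4 parityColumn)
    (hv₀ : v ≠ 0) : 9 ≤ hammingNorm v := by
  by_contra! hlt
  obtain ⟨g, hg, hfree⟩ := exists_symm_countP_freeIndices_le (v := v) (by omega)
  have hle := le_hammingNorm_of_mem_columnCode splitsInto_freeIndices parityColumn_pivotIndex
    search_columns (comp_symm_mem_columnCode hg hv)
    (fun h => hv₀ (funext fun i => by simpa using congrFun h (g i))) hfree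
  rw [hammingNorm_comp_equiv] at hle
  omega

/-- The identification of `F₄⁷⁴` with `F₄³⁷ × F₄³⁷` by concatenation of the two blocks. -/
def blockEquiv : Fin 74 ≃ Fin 2 × ZMod 37 := (finProdFinEquiv (m := 2) (n := 37)).symm

/-- The quasi-cyclic code of all `(a, b)` in `F₄³⁷ × F₄³⁷` with `θ a(ξ) + b(ξ) = 0`. -/
def code : Submodule F4 (Fin 74 → F4) := columnCode F4 (parityColumn ∘ blockEquiv)

lemma finrank_code : Module.finrank F4 code = 55 := by
  have hspan : Submodule.span F4 (Set.range (parityColumn ∘ blockEquiv)) = ⊤ :=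
    span_range_eq_top_of_single (pos := blockEquiv.symm ∘ pivotIndex) fun p => by
      simp only [Function.comp_apply, Equiv.apply_symm_apply, parityColumn_pivotIndex]
  have h := finrank_columnCode hspan
  rw [Module.finrank_fintype_fun_eq_card, Fintype.card_fin, Fintype.card_fin] at h
  exact Nat.add_right_cancel h

lemma nine_le_hammingWt {u : Fin 74 → F4} (hu : u ∈ code) (hu₀ : u ≠ 0) :
    9 ≤ hammingWt u := by
  rw [hammingWt_eq_hammingNorm, ← hammingNorm_comp_equiv u blockEquiv.symm]
  refine nine_le_hammingNorm ((comp_symm_mem_columnCode_iff _).mpr hu) fun h => hu₀ ?_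
  ext i
  simpa using congrFun h (blockEquiv i)

/-- The word `(1 + X + ω² X¹⁴ + ω² X¹⁷, X + X⁴ + ω X⁵ + ω² X⁷ + X¹²)` of minimum weight. -/
def minimumWord : Packed :=
  ⟨2 ^ 0 + 2 ^ 1 + 2 ^ 14 + 2 ^ 17 + (2 ^ 1 + 2 ^ 4 + 2 ^ 7 + 2 ^ 12) * 2 ^ 37,
    2 ^ 14 + 2 ^ 17 + (2 ^ 5 + 2 ^ 7) * 2 ^ 37⟩

lemma minimumWord_mem_code : minimumWord.toVec 74 ∈ code :=
  toVec_mem_columnCode (col := column ∘ blockEquiv) (by decide +kernel)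

lemma hammingWt_minimumWord : hammingWt (minimumWord.toVec 74) = 9 := by
  rw [hammingWt_eq_hammingNorm, Packed.hammingNorm_toVec]
  decide +kernel

lemma minimumWord_ne_zero : minimumWord.toVec 74 ≠ 0 := fun h => by
  have hwt := hammingWt_minimumWord
  rw [h, hammingWt_eq_hammingNorm, hammingNorm_zero] at hwt
  exact absurd hwt (by decide)

lemma hermDual_code_le : hermDual code ≤ code :=
  hermDual_columnCode_le_of_linComb (col := column ∘ blockEquiv) (by decide +kernel)

end QuasiCyclicCode

/-- There exists a Hermitian dual-containing `[74, 55, 9]₄` code. -/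
theorem exists_dual_containing_74_55_9 :
    ∃ Ccode : Submodule F4 (Fin 74 → F4),
      Module.finrank F4 ↥Ccode = 55 ∧
      (∀ u ∈ Ccode, u ≠ 0 → 9 ≤ hammingWt u) ∧
      (∃ u ∈ Ccode, u ≠ 0 ∧ hammingWt u = 9) ∧
      hermDual Ccode ≤ Ccode := by
  open QuasiCyclicCode in
  exact ⟨code, finrank_code, fun _ => nine_le_hammingWt,
    ⟨minimumWord.toVec 74, minimumWord_mem_code, minimumWord_ne_zero, hammingWt_minimumWord⟩,
    hermDual_code_le⟩

end
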